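/- (Band embedding) Let n_b ∈ ℂ and a₁, a₂ ∈ ℝ. The band-embedding constraint 2a₂ ≤ conj(T(θ))·n_b + conj(n_b)·T(θ) ≤ 2a₁ (equivalently a₂ ≤ Re(conj(n_b)·T(θ)) ≤ a₁) holds for every θ in the ellipsoid U if and only if there exist real scalars ξ₁ ≥ 0, ξ₂ ≥ 0 and real skew-symmetric matrices 𝒳₁, 𝒳₂ ∈ ℝ^{(n+1)×(n+1)} such that both Hermitian complex matrices A₂*·n_b + conj(n_b)·A₂ − 2a₁·A₁ − ξ₁·B + i𝒳₁ and −A₂*·n_b − conj(n_b)·A₂ + 2a₂·A₁ − ξ₂·B + i𝒳₂ are negative semidefinite. -/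

import Mathlib

open Matrix
open scoped ComplexOrder

/-- The transfer function value `T(θ) = (e + Z_N·θ)/(1 + Z_D·θ)`. -/
noncomputable def Tval {n : ℕ} (e : ℂ) (ZN ZD : Fin n → ℂ) (θ : Fin n → ℝ) : ℂ :=
  (e + ∑ i, ZN i * (θ i : ℂ)) / (1 + ∑ i, ZD i * (θ i : ℂ))

/-- The ellipsoid `U = {θ ∈ ℝⁿ : (θ−θ̂)ᵀP⁻¹(θ−θ̂) < χ}`. -/
noncomputable def ellipsoid {n : ℕ} (P : Matrix (Fin n) (Fin n) ℝ) (θhat : Fin n → ℝ)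
    (χ : ℝ) : Set (Fin n → ℝ) :=
  {θ | (θ - θhat) ⬝ᵥ P⁻¹ *ᵥ (θ - θhat) < χ}

/-- The Hermitian matrix `A₁ = [[Z_D*Z_D, Z_D*],[Z_D, 1]] ∈ ℂ^{(n+1)×(n+1)}`. -/
def A1mat {n : ℕ} (ZD : Fin n → ℂ) : Matrix (Fin n ⊕ Unit) (Fin n ⊕ Unit) ℂ :=
  Matrix.fromBlocks
    (Matrix.of fun i j => starRingEnd ℂ (ZD i) * ZD j)
    (Matrix.of fun i _ => starRingEnd ℂ (ZD i))
    (Matrix.of fun _ j => ZD j)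
    (Matrix.of fun _ _ => 1)

/-- The matrix `A₂ = [[Z_D*Z_N, Z_D*e],[Z_N, e]] ∈ ℂ^{(n+1)×(n+1)}`. -/
def A2mat {n : ℕ} (e : ℂ) (ZN ZD : Fin n → ℂ) : Matrix (Fin n ⊕ Unit) (Fin n ⊕ Unit) ℂ :=
  Matrix.fromBlocks
    (Matrix.of fun i j => starRingEnd ℂ (ZD i) * ZN j)
    (Matrix.of fun i _ => starRingEnd ℂ (ZD i) * e)
    (Matrix.of fun _ j => ZN j)
    (Matrix.of fun _ _ => e)

/-- The real symmetric matrix `B = [[P⁻¹, −P⁻¹θ̂],[−θ̂ᵀP⁻¹, θ̂ᵀP⁻¹θ̂ − χ]]`. -/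
noncomputable def Bmat {n : ℕ} (P : Matrix (Fin n) (Fin n) ℝ) (θhat : Fin n → ℝ) (χ : ℝ) :
    Matrix (Fin n ⊕ Unit) (Fin n ⊕ Unit) ℝ :=
  Matrix.fromBlocks P⁻¹
    (Matrix.of fun i _ => -(P⁻¹ *ᵥ θhat) i)
    (Matrix.of fun _ j => -(θhat ᵥ* P⁻¹) j)
    (Matrix.of fun _ _ => θhat ⬝ᵥ P⁻¹ *ᵥ θhat - χ)

/-!
The two inequalities are treated separately, the lower one being the upper one for `(-n_b, -a₂)`.
At `x = (θ, 1)` the quadratic form of `B` is the defining function of the ellipsoid, and that of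
`A₂*·n_b + conj(n_b)·A₂ − 2a·A₁` is `2 |1 + Z_D·θ|² (Re(conj(n_b)·T(θ)) − a)`. Since `B` is
nonnegative on vectors `(v, 0)`, the upper inequality on `U` says that the second form is `≤ 0`
wherever the first is `< 0`. By the S-lemma this happens iff the second form is dominated by
`ξ ≥ 0` times the first. Only real vectors enter, so this constrains only the real part of a
Hermitian matrix; the skew-symmetric matrix `𝒳` is what cancels its imaginary part.
-/

section SLemma

open QuadraticMap (polar)

lemma quadraticForm_add_smul {R M : Type*} [CommRing R] [AddCommGroup M] [Module R M]
    (Q : QuadraticForm R M) (x y : M) (s : R) :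
    Q (x + s • y) = Q x + s * polar Q x y + s ^ 2 * Q y := by
  rw [QuadraticMap.map_add Q, QuadraticMap.map_smul, QuadraticMap.polar_smul_right]
  simp only [smul_eq_mul]
  ring

variable {V : Type*} [AddCommGroup V] [Module ℝ V] {F B : QuadraticForm ℝ V}

lemma quadraticForm_nonpos_of_eq_zero (h : ∀ x, B x < 0 → F x ≤ 0) {x₀ : V} (hx₀ : B x₀ < 0)
    {z : V} (hz : B z = 0) : F z ≤ 0 := by
  have hmin : ∀ s : ℝ, 0 < s → min (F (z + s • x₀)) (F (z + (-s) • x₀)) ≤ 0 := by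
    intro s hs
    have hsum : B (z + s • x₀) + B (z + (-s) • x₀) < 0 := by
      rw [quadraticForm_add_smul, quadraticForm_add_smul, hz]
      linarith [mul_neg_of_pos_of_neg (pow_pos hs 2) hx₀]
    rcases lt_or_lt_of_add_lt_add (hsum.trans_eq (add_zero 0).symm) with hneg | hneg
    · exact min_le_of_left_le (h _ hneg)
    · exact min_le_of_right_le (h _ hneg)
  have hcont : Continuous fun s : ℝ ↦ min (F (z + s • x₀)) (F (z + (-s) • x₀)) := by
    simp only [quadraticForm_add_smul]
    fun_prop
  have hlim : Filter.Tendsto (fun s : ℝ ↦ min (F (z + s • x₀)) (F (z + (-s) • x₀)))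
      (nhdsWithin 0 (Set.Ioi 0)) (nhds (F z)) := by
    simpa using (hcont.tendsto 0).mono_left nhdsWithin_le_nhds
  exact le_of_tendsto hlim (Filter.eventually_of_mem self_mem_nhdsWithin hmin)

lemma quadraticForm_add_nonpos (h : ∀ z, B z = 0 → F z ≤ 0) {x y : V} (hxy : B x + B y = 0) :
    F x + F y ≤ 0 := by
  rcases eq_or_ne (B y) 0 with hy | hy
  · exact add_nonpos (h x (by linarith)) (h y hy)
  have hdiscrim : 0 ≤ discrim (B y) (polar B x y) (-B y) := by
    rw [discrim]
    nlinarith [sq_nonneg (polar B x y), sq_nonneg (B y)]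
  obtain ⟨p, hp⟩ : ∃ p, B y * (p * p) + polar B x y * p + -B y = 0 :=
    exists_quadratic_eq_zero hy ⟨_, (Real.mul_self_sqrt hdiscrim).symm⟩
  -- `x + p y` and `y - p x` are both isotropic for `B`; the cross terms cancel in their sum.
  have hu : F (x + p • y) ≤ 0 := h _ <| by
    rw [quadraticForm_add_smul]
    linear_combination hp + hxy
  have hv : F (y + (-p) • x) ≤ 0 := h _ <| by
    rw [quadraticForm_add_smul, QuadraticMap.polar_comm]
    linear_combination p ^ 2 * hxy - hp
  rw [quadraticForm_add_smul] at hu hv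
  rw [QuadraticMap.polar_comm] at hv
  have hsum : (1 + p ^ 2) * (F x + F y) ≤ 0 := by linarith
  exact nonpos_of_mul_nonpos_right hsum (by positivity)

lemma quadraticForm_div_le_div (h : ∀ z, B z = 0 → F z ≤ 0) {x y : V} (hx : B x < 0)
    (hy : 0 < B y) : F y / B y ≤ F x / B x := by
  have hr : 0 ≤ -B x / B y := div_nonneg (by linarith) hy.le
  have hscale (Q : QuadraticForm ℝ V) : Q (√(-B x / B y) • y) = -B x / B y * Q y := by
    rw [QuadraticMap.map_smul, Real.mul_self_sqrt hr, smul_eq_mul]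
  have hsum : F x + -B x / B y * F y ≤ 0 := by
    rw [← hscale]
    refine quadraticForm_add_nonpos h ?_
    rw [hscale, div_mul_cancel₀ _ hy.ne', add_neg_cancel]
  rw [le_div_iff_of_neg hx]
  linarith [show F y / B y * B x = -(-B x / B y * F y) by ring]

theorem s_lemma (hB : ∃ x, B x < 0) :
    (∀ x, B x < 0 → F x ≤ 0) ↔ ∃ ξ : ℝ, 0 ≤ ξ ∧ ∀ x, F x ≤ ξ * B x := by
  refine ⟨fun h ↦ ?_, fun ⟨ξ, hξ, hF⟩ x hx ↦
    (hF x).trans (mul_nonpos_of_nonneg_of_nonpos hξ hx.le)⟩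
  obtain ⟨x₀, hx₀⟩ := hB
  have hzero : ∀ z, B z = 0 → F z ≤ 0 := fun z ↦ quadraticForm_nonpos_of_eq_zero h hx₀
  set S : Set ℝ := (fun x ↦ F x / B x) '' {x | B x < 0}
  have hS : S.Nonempty := ⟨_, x₀, hx₀, rfl⟩
  have hS_nonneg : ∀ t ∈ S, 0 ≤ t := by
    rintro _ ⟨x, hx, rfl⟩
    exact div_nonneg_of_nonpos (h x hx) (le_of_lt hx)
  refine ⟨sInf S, Real.sInf_nonneg hS_nonneg, fun x ↦ ?_⟩
  rcases lt_trichotomy (B x) 0 with hx | hx | hx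
  · exact (le_div_iff_of_neg hx).1 (csInf_le ⟨0, hS_nonneg⟩ ⟨x, hx, rfl⟩)
  · simpa only [hx, mul_zero] using hzero x hx
  · refine (div_le_iff₀ hx).1 (le_csInf hS ?_)
    rintro _ ⟨y, hy, rfl⟩
    exact quadraticForm_div_le_div hzero hy hx

end SLemma

section MatrixForms

variable {ι : Type*}

lemma isHermitian_map_re {M : Matrix ι ι ℂ} (hM : M.IsHermitian) :
    (M.map Complex.re).IsHermitian :=
  hM.map Complex.re fun _ ↦ Complex.conj_re _

lemma toQuadraticForm'_eq_dotProduct {R : Type*} [CommRing R] [Fintype ι] [DecidableEq ι]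
    (M : Matrix ι ι R) (x : ι → R) : M.toQuadraticForm' x = x ⬝ᵥ M *ᵥ x :=
  Matrix.toLinearMap₂'_apply' M x x

lemma toQuadraticForm'_map_re [Fintype ι] [DecidableEq ι] (M : Matrix ι ι ℂ) (x : ι → ℝ) :
    (M.map Complex.re).toQuadraticForm' x =
      (star (fun i ↦ (x i : ℂ)) ⬝ᵥ M *ᵥ fun i ↦ (x i : ℂ)).re := by
  simp [toQuadraticForm'_eq_dotProduct, dotProduct, mulVec]

lemma star_dotProduct_vecMulVec_mulVec {R : Type*} [CommRing R] [StarRing R]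
    [Fintype ι] (u w y : ι → R) :
    star y ⬝ᵥ vecMulVec (star u) w *ᵥ y = star (u ⬝ᵥ y) * (w ⬝ᵥ y) := by
  rw [vecMulVec_mulVec, op_smul_eq_smul, dotProduct_smul, star_dotProduct_star,
    smul_eq_mul, mul_comm, dotProduct_comm]

lemma posSemidef_neg_sub_smul_iff [Fintype ι] [DecidableEq ι] {M B : Matrix ι ι ℝ}
    (hM : M.IsHermitian) (hB : B.IsHermitian) (ξ : ℝ) :
    (-(M - ξ • B)).PosSemidef ↔ ∀ x, M.toQuadraticForm' x ≤ ξ * B.toQuadraticForm' x := by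
  have hsymm : (-(M - ξ • B)).IsHermitian := (hM.sub (hB.smul (.all ξ))).neg
  simp only [posSemidef_iff_dotProduct_mulVec, hsymm, true_and, toQuadraticForm'_eq_dotProduct,
    star_trivial, neg_mulVec, sub_mulVec, smul_mulVec, dotProduct_neg, dotProduct_sub,
    dotProduct_smul, smul_eq_mul, neg_nonneg, sub_nonpos]

lemma posSemidef_map_ofReal [Finite ι] {M : Matrix ι ι ℝ} (hM : M.PosSemidef) :
    (M.map (fun b ↦ (b : ℂ))).PosSemidef := by
  obtain ⟨m, v, rfl⟩ := posSemidef_iff_eq_sum_vecMulVec.1 hM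
  have hsum : (∑ i, vecMulVec (v i) (star (v i))).map (fun b ↦ (b : ℂ)) =
      ∑ i, vecMulVec (fun j ↦ (v i j : ℂ)) (star fun j ↦ (v i j : ℂ)) := by
    ext j k
    simp [Matrix.sum_apply, vecMulVec_apply]
  rw [hsum]
  exact posSemidef_sum _ fun i _ ↦ posSemidef_vecMulVec_self_star _

lemma posSemidef_map_re [Finite ι] {M : Matrix ι ι ℂ} (hM : M.PosSemidef) :
    (M.map Complex.re).PosSemidef := by
  classical
  have := Fintype.ofFinite ι
  refine .of_dotProduct_mulVec_nonneg (isHermitian_map_re hM.isHermitian) fun x ↦ ?_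
  rw [star_trivial, ← toQuadraticForm'_eq_dotProduct, toQuadraticForm'_map_re]
  exact hM.re_dotProduct_nonneg _

lemma exists_skew_posSemidef_neg_iff [Finite ι] {H : Matrix ι ι ℂ} (hH : H.IsHermitian) :
    (∃ X : Matrix ι ι ℝ, Xᵀ = -X ∧
        (-(H + Complex.I • X.map (fun b ↦ (b : ℂ)))).PosSemidef) ↔
      (-(H.map Complex.re)).PosSemidef := by
  constructor
  · rintro ⟨X, -, hX⟩
    convert posSemidef_map_re hX using 1
    ext i j
    simp
  · intro h
    refine ⟨-(H.map Complex.im), ?_, ?_⟩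
    · ext i j
      simpa using congrArg Complex.im (hH.apply i j)
    · convert posSemidef_map_ofReal h using 1
      ext i j
      apply Complex.ext <;> simp

theorem hermitian_s_lemma [Fintype ι] [DecidableEq ι] {H : Matrix ι ι ℂ} (hH : H.IsHermitian)
    {B : Matrix ι ι ℝ} (hB : B.IsHermitian) (hneg : ∃ x, B.toQuadraticForm' x < 0) :
    (∀ x, B.toQuadraticForm' x < 0 → (H.map Complex.re).toQuadraticForm' x ≤ 0) ↔
      ∃ ξ : ℝ, 0 ≤ ξ ∧ ∃ X : Matrix ι ι ℝ, Xᵀ = -X ∧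
        (-(H - (ξ : ℂ) • B.map (fun b ↦ (b : ℂ)) +
          Complex.I • X.map (fun b ↦ (b : ℂ)))).PosSemidef := by
  rw [s_lemma hneg]
  refine exists_congr fun ξ ↦ and_congr_right fun _ ↦ ?_
  have hpencil : (H - (ξ : ℂ) • B.map (fun b ↦ (b : ℂ))).IsHermitian :=
    hH.sub ((hB.map _ fun b ↦ (Complex.conj_ofReal b).symm).smul (Complex.conj_ofReal ξ))
  have hre : (H - (ξ : ℂ) • B.map (fun b ↦ (b : ℂ))).map Complex.re =
      H.map Complex.re - ξ • B := by
    ext i j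
    simp
  rw [exists_skew_posSemidef_neg_iff hpencil, hre,
    posSemidef_neg_sub_smul_iff (isHermitian_map_re hH) hB]

end MatrixForms

lemma quadraticForm_nonpos_iff_sumElim_one {ι : Type*} {F B : QuadraticForm ℝ (ι ⊕ Unit → ℝ)}
    (hB : ∀ v : ι → ℝ, 0 ≤ B (Sum.elim v 0)) :
    (∀ x, B x < 0 → F x ≤ 0) ↔
      ∀ θ : ι → ℝ, B (Sum.elim θ 1) < 0 → F (Sum.elim θ 1) ≤ 0 := by
  refine ⟨fun h θ ↦ h _, fun h x hx ↦ ?_⟩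
  obtain ⟨v, t, rfl⟩ : ∃ v t, x = Sum.elim v fun _ ↦ t :=
    ⟨x ∘ Sum.inl, x (Sum.inr ()), (Sum.elim_comp_inl_inr x).symm⟩
  have ht : t ≠ 0 := by
    rintro rfl
    exact (hB v).not_gt hx
  have hx_eq : Sum.elim v (fun _ ↦ t) = t • Sum.elim (t⁻¹ • v) (1 : Unit → ℝ) := by
    ext (i | i) <;> simp [ht]
  have ht_sq : 0 < t * t := mul_self_pos.2 ht
  rw [hx_eq, QuadraticMap.map_smul, smul_eq_mul] at hx ⊢
  exact mul_nonpos_of_nonneg_of_nonpos ht_sq.le (h _ (neg_of_mul_neg_right hx ht_sq.le))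

section Ellipsoid

variable {n : ℕ}

lemma Bmat_isHermitian {P : Matrix (Fin n) (Fin n) ℝ} (hP : P.IsHermitian) (θhat : Fin n → ℝ)
    (χ : ℝ) : (Bmat P θhat χ).IsHermitian := by
  have hPinv : P⁻¹ᵀ = P⁻¹ := hP.inv
  refine .fromBlocks hP.inv ?_ (by ext; simp)
  ext i j
  simp [← mulVec_transpose, hPinv]

lemma Bmat_mulVec_sumElim (P : Matrix (Fin n) (Fin n) ℝ) (θhat v : Fin n → ℝ) (χ t : ℝ) :
    Bmat P θhat χ *ᵥ (Sum.elim v fun _ ↦ t) =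
      Sum.elim (P⁻¹ *ᵥ (v - t • θhat)) fun _ ↦ -(θhat ⬝ᵥ P⁻¹ *ᵥ (v - t • θhat)) - t * χ := by
  have hcol : (Matrix.of fun i (_ : Unit) ↦ -(P⁻¹ *ᵥ θhat) i) *ᵥ (fun _ ↦ t) =
      -(t • P⁻¹ *ᵥ θhat) := by
    ext i
    simp [mulVec_eq_sum]
  have hrow : (Matrix.of fun (_ : Unit) j ↦ -(θhat ᵥ* P⁻¹) j) *ᵥ v =
      fun _ ↦ -(θhat ⬝ᵥ P⁻¹ *ᵥ v) := by
    ext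
    rw [dotProduct_mulVec, ← neg_dotProduct]
    rfl
  rw [Bmat, fromBlocks_mulVec, Sum.elim_comp_inl, Sum.elim_comp_inr, hcol, hrow, mulVec_sub,
    mulVec_smul, dotProduct_sub, dotProduct_smul, ← sub_eq_add_neg]
  congr 1
  ext
  simp only [mulVec_eq_sum, op_smul_eq_smul, Finset.univ_unique, PUnit.default_eq_unit,
    Finset.sum_singleton, Pi.add_apply, Pi.smul_apply, transpose_apply, of_apply, smul_eq_mul,
    neg_sub]
  ring

lemma Bmat_toQuadraticForm'_sumElim (P : Matrix (Fin n) (Fin n) ℝ) (θhat v : Fin n → ℝ)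
    (χ t : ℝ) :
    (Bmat P θhat χ).toQuadraticForm' (Sum.elim v fun _ ↦ t) =
      (v - t • θhat) ⬝ᵥ P⁻¹ *ᵥ (v - t • θhat) - t ^ 2 * χ := by
  rw [toQuadraticForm'_eq_dotProduct, Bmat_mulVec_sumElim, sumElim_dotProduct_sumElim,
    sub_dotProduct, smul_dotProduct]
  simp only [dotProduct, Fintype.sum_unique, smul_eq_mul]
  ring

lemma mem_ellipsoid_iff_Bmat_neg {P : Matrix (Fin n) (Fin n) ℝ} {θhat θ : Fin n → ℝ} {χ : ℝ} :
    θ ∈ ellipsoid P θhat χ ↔ (Bmat P θhat χ).toQuadraticForm' (Sum.elim θ 1) < 0 := by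
  rw [Pi.one_def, Bmat_toQuadraticForm'_sumElim, one_smul, one_pow, one_mul, sub_neg]
  rfl

end Ellipsoid

lemma re_mul_div_le_iff {D : ℂ} (hD : D ≠ 0) (c N : ℂ) {a : ℝ} :
    (c * (N / D)).re ≤ a ↔ (c * (starRingEnd ℂ D * N)).re ≤ a * Complex.normSq D := by
  have hquot : c * (N / D) = c * (starRingEnd ℂ D * N) / (Complex.normSq D : ℂ) := by
    rw [div_eq_mul_inv, Complex.inv_def, div_eq_mul_inv, Complex.ofReal_inv]
    ring
  rw [hquot, Complex.div_ofReal_re, div_le_iff₀ (Complex.normSq_pos.2 hD)]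

section BandMatrix

variable {n : ℕ} (e : ℂ) (ZN ZD : Fin n → ℂ) (nb : ℂ) (a : ℝ)

/-- The Hermitian matrix `A₂*·n_b + conj(n_b)·A₂ − 2a·A₁` of the upper constraint
`Re(conj(n_b)·T(θ)) ≤ a`, after multiplication by `2 |1 + Z_D·θ|²`. -/
def bandMatrix : Matrix (Fin n ⊕ Unit) (Fin n ⊕ Unit) ℂ :=
  nb • (A2mat e ZN ZD)ᴴ + starRingEnd ℂ nb • A2mat e ZN ZD - ((2 * a : ℝ) : ℂ) • A1mat ZD

lemma A1mat_eq_vecMulVec :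
    A1mat ZD = vecMulVec (star (Sum.elim ZD 1)) (Sum.elim ZD (1 : Unit → ℂ)) := by
  ext (i | i) (j | j) <;> simp [A1mat, vecMulVec]

lemma A2mat_eq_vecMulVec :
    A2mat e ZN ZD = vecMulVec (star (Sum.elim ZD 1)) (Sum.elim ZN fun _ : Unit ↦ e) := by
  ext (i | i) (j | j) <;> simp [A2mat, vecMulVec]

lemma bandMatrix_isHermitian : (bandMatrix e ZN ZD nb a).IsHermitian := by
  simp only [IsHermitian, bandMatrix, A1mat_eq_vecMulVec, conjTranspose_sub, conjTranspose_add,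
    conjTranspose_smul, conjTranspose_conjTranspose, conjTranspose_vecMulVec, star_star]
  simp [add_comm]

lemma bandMatrix_neg_neg :
    bandMatrix e ZN ZD (-nb) (-a) =
      -(nb • (A2mat e ZN ZD)ᴴ) - starRingEnd ℂ nb • A2mat e ZN ZD +
        ((2 * a : ℝ) : ℂ) • A1mat ZD := by
  simp only [bandMatrix, map_neg, neg_smul, mul_neg, Complex.ofReal_neg, sub_neg_eq_add,
    ← sub_eq_add_neg]

lemma sumElim_dotProduct_sumElim_one (θ : Fin n → ℝ) (Z : Fin n → ℂ) (c : Unit → ℂ) :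
    Sum.elim Z c ⬝ᵥ (fun i ↦ ((Sum.elim θ (1 : Unit → ℝ) i : ℝ) : ℂ)) =
      c () + ∑ i, Z i * (θ i : ℂ) := by
  simp [dotProduct, add_comm]

lemma bandMatrix_toQuadraticForm'_sumElim_one (θ : Fin n → ℝ) :
    ((bandMatrix e ZN ZD nb a).map Complex.re).toQuadraticForm' (Sum.elim θ 1) =
      2 * ((starRingEnd ℂ nb * (starRingEnd ℂ (1 + ∑ i, ZD i * (θ i : ℂ)) *
          (e + ∑ i, ZN i * (θ i : ℂ)))).re -
        a * Complex.normSq (1 + ∑ i, ZD i * (θ i : ℂ))) := by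
  rw [toQuadraticForm'_map_re, bandMatrix, A1mat_eq_vecMulVec, A2mat_eq_vecMulVec,
    conjTranspose_vecMulVec, star_star]
  simp only [sub_mulVec, add_mulVec, smul_mulVec, dotProduct_sub, dotProduct_add, dotProduct_smul,
    star_dotProduct_vecMulVec_mulVec, sumElim_dotProduct_sumElim_one, smul_eq_mul,
    Pi.one_apply]
  generalize 1 + ∑ i, ZD i * (θ i : ℂ) = D
  generalize e + ∑ i, ZN i * (θ i : ℂ) = N
  simp only [RCLike.star_def, Complex.ofReal_mul, Complex.ofReal_ofNat, Complex.sub_re,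
    Complex.add_re, Complex.mul_re, Complex.conj_re, Complex.conj_im, neg_mul, sub_neg_eq_add,
    Complex.mul_im, Complex.re_ofNat, Complex.ofReal_re, Complex.im_ofNat, Complex.ofReal_im,
    mul_zero, sub_zero, zero_mul, add_zero, Complex.normSq_apply]
  ring

lemma bandMatrix_toQuadraticForm'_nonpos_iff {θ : Fin n → ℝ}
    (hD : (1 : ℂ) + ∑ i, ZD i * (θ i : ℂ) ≠ 0) :
    ((bandMatrix e ZN ZD nb a).map Complex.re).toQuadraticForm' (Sum.elim θ 1) ≤ 0 ↔
      (starRingEnd ℂ nb * Tval e ZN ZD θ).re ≤ a := by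
  rw [bandMatrix_toQuadraticForm'_sumElim_one, Tval, re_mul_div_le_iff hD]
  constructor <;> intro h <;> linarith

end BandMatrix

theorem upper_band_iff_LMI {n : ℕ} (e : ℂ) (ZN ZD : Fin n → ℂ)
    {P : Matrix (Fin n) (Fin n) ℝ} (hP : P.PosDef) {θhat : Fin n → ℝ} {χ : ℝ} (hχ : 0 < χ)
    (hden : ∀ θ ∈ ellipsoid P θhat χ, (1 : ℂ) + ∑ i, ZD i * (θ i : ℂ) ≠ 0) (nb : ℂ) (a : ℝ) :
    (∀ θ ∈ ellipsoid P θhat χ, (starRingEnd ℂ nb * Tval e ZN ZD θ).re ≤ a) ↔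
      ∃ ξ : ℝ, 0 ≤ ξ ∧ ∃ X : Matrix (Fin n ⊕ Unit) (Fin n ⊕ Unit) ℝ, Xᵀ = -X ∧
        (-(bandMatrix e ZN ZD nb a - (ξ : ℂ) • (Bmat P θhat χ).map (fun b ↦ (b : ℂ)) +
          Complex.I • X.map (fun b ↦ (b : ℂ)))).PosSemidef := by
  have hcenter : θhat ∈ ellipsoid P θhat χ := by simpa [ellipsoid] using hχ
  have hinfty (v : Fin n → ℝ) : 0 ≤ (Bmat P θhat χ).toQuadraticForm' (Sum.elim v 0) := by
    have hv := Bmat_toQuadraticForm'_sumElim P θhat v χ 0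
    rw [zero_smul, sub_zero, zero_pow two_ne_zero, zero_mul, sub_zero] at hv
    exact hv ▸ hP.inv.posSemidef.dotProduct_mulVec_nonneg v
  rw [← hermitian_s_lemma (bandMatrix_isHermitian e ZN ZD nb a)
      (Bmat_isHermitian hP.isHermitian θhat χ)
      ⟨_, mem_ellipsoid_iff_Bmat_neg.1 hcenter⟩,
    quadraticForm_nonpos_iff_sumElim_one hinfty]
  simp only [← mem_ellipsoid_iff_Bmat_neg]
  exact forall₂_congr fun θ hθ ↦
    (bandMatrix_toQuadraticForm'_nonpos_iff e ZN ZD nb a (hden θ hθ)).symm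

/-- Band embedding: `2a₂ ≤ conj(T(θ))·n_b + conj(n_b)·T(θ) ≤ 2a₁` (i.e.
`a₂ ≤ Re(conj(n_b)·T(θ)) ≤ a₁`) holds for every `θ` in the ellipsoid `U` iff there exist
`ξ₁, ξ₂ ≥ 0` and real skew-symmetric matrices `𝒳₁, 𝒳₂` such that the Hermitian matrices
`A₂*·n_b + conj(n_b)·A₂ − 2a₁·A₁ − ξ₁·B + i𝒳₁` and
`−A₂*·n_b − conj(n_b)·A₂ + 2a₂·A₁ − ξ₂·B + i𝒳₂` are both negative semidefinite. -/
theorem band_embedding_iff_LMI {n : ℕ} (e : ℂ) (ZN ZD : Fin n → ℂ)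
    (P : Matrix (Fin n) (Fin n) ℝ) (hP : P.PosDef)
    (θhat : Fin n → ℝ) (χ : ℝ) (hχ : 0 < χ)
    (hden : ∀ θ ∈ ellipsoid P θhat χ, (1 : ℂ) + ∑ i, ZD i * (θ i : ℂ) ≠ 0)
    (nb : ℂ) (a₁ a₂ : ℝ) :
    (∀ θ ∈ ellipsoid P θhat χ,
        a₂ ≤ (starRingEnd ℂ nb * Tval e ZN ZD θ).re ∧
          (starRingEnd ℂ nb * Tval e ZN ZD θ).re ≤ a₁) ↔
      ∃ ξ₁ ξ₂ : ℝ, 0 ≤ ξ₁ ∧ 0 ≤ ξ₂ ∧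
        ∃ X₁ X₂ : Matrix (Fin n ⊕ Unit) (Fin n ⊕ Unit) ℝ, X₁ᵀ = -X₁ ∧ X₂ᵀ = -X₂ ∧
          (-(nb • (A2mat e ZN ZD)ᴴ + starRingEnd ℂ nb • A2mat e ZN ZD -
              ((2 * a₁ : ℝ) : ℂ) • A1mat ZD -
              (ξ₁ : ℂ) • (Bmat P θhat χ).map (fun b => (b : ℂ)) +
              Complex.I • X₁.map (fun b => (b : ℂ)))).PosSemidef ∧
          (-(-(nb • (A2mat e ZN ZD)ᴴ) - starRingEnd ℂ nb • A2mat e ZN ZD +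
              ((2 * a₂ : ℝ) : ℂ) • A1mat ZD -
              (ξ₂ : ℂ) • (Bmat P θhat χ).map (fun b => (b : ℂ)) +
              Complex.I • X₂.map (fun b => (b : ℂ)))).PosSemidef := by
  have hupper := upper_band_iff_LMI e ZN ZD hP hχ hden nb a₁
  have hlower := upper_band_iff_LMI e ZN ZD hP hχ hden (-nb) (-a₂)
  simp only [map_neg, neg_mul, Complex.neg_re, neg_le_neg_iff, bandMatrix_neg_neg] at hlower
  rw [bandMatrix] at hupper
  rw [forall₂_and, hlower, hupper]
  constructor
  · rintro ⟨⟨ξ₂, hξ₂, X₂, hX₂, hneg₂⟩, ξ₁, hξ₁, X₁, hX₁, hneg₁⟩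
    exact ⟨ξ₁, ξ₂, hξ₁, hξ₂, X₁, X₂, hX₁, hX₂, hneg₁, hneg₂⟩
  · rintro ⟨ξ₁, ξ₂, hξ₁, hξ₂, X₁, X₂, hX₁, hX₂, hneg₁, hneg₂⟩
    exact ⟨⟨ξ₂, hξ₂, X₂, hX₂, hneg₂⟩, ξ₁, hξ₁, X₁, hX₁, hneg₁⟩
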